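/- For every complex number q with 0 < |q| < 1, one has ∑_{i,j,k,l ≥ 0} q^{4i²+4j²+4k²+5l²−4il−4jl+4kl} / ((q⁸;q⁸)_i (q⁸;q⁸)_j (q⁸;q⁸)_k (q⁸;q⁸)_l) = J_8⁷ J_{4,40} J_{32,80} / (J_4⁴ J_16⁴ J_80) + 4q⁵ · J_16³ J_{16,80} / J_8⁴. (This is the paper's identity F(1, 1, 1, 1; q²) = J_2⁷ J_{1,10} J_{8,20}/(J_1⁴ J_4⁴ J_20) + 4q^{5/4} J_4³ J_{4,20}/J_2⁴, with q replaced by q⁴ throughout to clear fractional exponents.) -/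

import Mathlib

open scoped BigOperators

/-- The infinite q-Pochhammer symbol `(a; q)_∞ = ∏_{k=0}^∞ (1 - a q^k)`. -/
noncomputable def qPochInf (a q : ℂ) : ℂ := ∏' n : ℕ, (1 - a * q ^ n)

/-- The finite q-Pochhammer symbol `(a; q)_n = ∏_{k=0}^{n-1} (1 - a q^k)`. -/
noncomputable def qPoch (a q : ℂ) (n : ℕ) : ℂ :=
  Finset.prod (Finset.range n) (fun k => 1 - a * q ^ k)

/-- `J_m = (q^m; q^m)_∞`. -/
noncomputable def J (q : ℂ) (m : ℕ) : ℂ := qPochInf (q ^ m) (q ^ m)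

/-- `J_{a,m} = (q^a; q^m)_∞ (q^{m-a}; q^m)_∞ (q^m; q^m)_∞`. -/
noncomputable def Jam (q : ℂ) (a m : ℕ) : ℂ :=
  qPochInf (q ^ a) (q ^ m) * qPochInf (q ^ (m - a)) (q ^ m) * qPochInf (q ^ m) (q ^ m)

open Filter Topology

lemma sum_norm_aux (a : ℂ) {x : ℂ} (hx : ‖x‖ < 1) : Summable (fun n : ℕ => ‖-(a * x ^ n)‖) := by
  simp only [norm_neg, norm_mul, norm_pow]
  exact (summable_geometric_of_lt_one (norm_nonneg _) hx).mul_left _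

lemma mult_aux (a : ℂ) {x : ℂ} (hx : ‖x‖ < 1) : Multipliable (fun n : ℕ => 1 - a * x ^ n) := by
  simpa [sub_eq_add_neg] using multipliable_one_add_of_summable (sum_norm_aux a hx)

lemma qPoch_tendsto (a : ℂ) {x : ℂ} (hx : ‖x‖ < 1) :
    Tendsto (fun n => qPoch a x n) atTop (𝓝 (qPochInf a x)) :=
  (mult_aux a hx).hasProd.tendsto_prod_nat

lemma qPoch_zero (a x : ℂ) : qPoch a x 0 = 1 := by simp [qPoch]

lemma qPoch_succ (a x : ℂ) (n : ℕ) : qPoch a x (n+1) = qPoch a x n * (1 - a * x ^ n) := by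
  simp [qPoch, Finset.prod_range_succ]

lemma qPoch_add (a x : ℂ) (m n : ℕ) :
    qPoch a x (m+n) = qPoch a x m * qPoch (a * x ^ m) x n := by
  simp only [qPoch, Finset.prod_range_add]
  congr 1
  refine Finset.prod_congr rfl fun i _ => ?_
  ring

lemma qPochInf_split (a : ℂ) {x : ℂ} (hx : ‖x‖ < 1) (m : ℕ) :
    qPochInf a x = qPoch a x m * qPochInf (a * x ^ m) x := by
  have h1 := (qPoch_tendsto a hx).comp (tendsto_add_atTop_nat m)
  have h2 := (qPoch_tendsto (a * x ^ m) hx).const_mul (qPoch a x m)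
  refine tendsto_nhds_unique h1 (h2.congr fun n => ?_)
  simp only [Function.comp]
  rw [add_comm, qPoch_add]

lemma qPoch_ne_zero {a x : ℂ} (h : ∀ n : ℕ, a * x ^ n ≠ 1) (n : ℕ) : qPoch a x n ≠ 0 := by
  rw [qPoch, Finset.prod_ne_zero_iff]
  intro i _
  exact sub_ne_zero.2 (h i).symm

lemma qPochInf_ne_zero {a x : ℂ} (hx : ‖x‖ < 1) (h : ∀ n : ℕ, a * x ^ n ≠ 1) :
    qPochInf a x ≠ 0 := by
  have := tprod_one_add_ne_zero_of_summable (f := fun n : ℕ => -(a * x ^ n)) (fun i => by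
    rw [← sub_eq_add_neg]; exact sub_ne_zero.2 (h i).symm) (sum_norm_aux a hx)
  simpa [qPochInf, sub_eq_add_neg] using this

lemma ne_one_aux {a x : ℂ} (ha : ‖a‖ < 1) (hx : ‖x‖ < 1) (n : ℕ) : a * x ^ n ≠ 1 := by
  intro h
  have h2 : ‖a * x ^ n‖ = 1 := by rw [h]; simp
  rw [norm_mul, norm_pow] at h2
  have : ‖x‖ ^ n ≤ 1 := pow_le_one₀ (norm_nonneg _) hx.le
  nlinarith [norm_nonneg a, pow_nonneg (norm_nonneg x) n]

lemma qPoch_ne {a x : ℂ} (ha : ‖a‖ < 1) (hx : ‖x‖ < 1) (n : ℕ) : qPoch a x n ≠ 0 :=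
  qPoch_ne_zero (ne_one_aux ha hx) n

lemma qPochInf_ne {a x : ℂ} (ha : ‖a‖ < 1) (hx : ‖x‖ < 1) : qPochInf a x ≠ 0 :=
  qPochInf_ne_zero hx (ne_one_aux ha hx)

lemma qPoch_mul_neg (a x : ℂ) (n : ℕ) :
    qPoch a x n * qPoch (-a) x n = qPoch (a^2) (x^2) n := by
  simp only [qPoch, ← Finset.prod_mul_distrib]
  refine Finset.prod_congr rfl fun i _ => ?_
  ring

lemma norm_pow_lt {x : ℂ} (hx : ‖x‖ < 1) {n : ℕ} (hn : n ≠ 0) : ‖x ^ n‖ < 1 := by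
  rw [norm_pow]; exact pow_lt_one₀ (norm_nonneg _) hx hn

lemma qPochInf_mul_neg (a : ℂ) {x : ℂ} (hx : ‖x‖ < 1) :
    qPochInf a x * qPochInf (-a) x = qPochInf (a^2) (x^2) := by
  refine tendsto_nhds_unique ((qPoch_tendsto a hx).mul (qPoch_tendsto (-a) hx))
    ((qPoch_tendsto (a^2) (norm_pow_lt hx two_ne_zero)).congr fun n => ?_)
  rw [qPoch_mul_neg]

lemma qPoch_dissect (a x : ℂ) (k n : ℕ) :
    qPoch a x (k*n) = ∏ i ∈ Finset.range k, qPoch (a * x^i) (x^k) n := by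
  induction n with
  | zero => simp [qPoch]
  | succ n ih =>
    rw [Nat.mul_succ, qPoch_add, ih]
    simp only [qPoch_succ, Finset.prod_mul_distrib]
    congr 1
    refine Finset.prod_congr rfl fun i _ => ?_
    ring

lemma qPochInf_dissect (a : ℂ) {x : ℂ} (hx : ‖x‖ < 1) {k : ℕ} (hk : k ≠ 0) :
    qPochInf a x = ∏ i ∈ Finset.range k, qPochInf (a * x^i) (x^k) := by
  have h1 : Tendsto (fun n => qPoch a x (k*n)) atTop (𝓝 (qPochInf a x)) :=
    (qPoch_tendsto a hx).comp (tendsto_id.const_mul_atTop' (Nat.pos_of_ne_zero hk))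
  refine tendsto_nhds_unique h1 ?_
  simp only [qPoch_dissect]
  exact tendsto_finsetProd _ fun i _ => qPoch_tendsto _ (norm_pow_lt hx hk)

/-- Reciprocal of `(x;x)_m`, zero for negative `m`. -/
noncomputable def rr (x : ℂ) (m : ℤ) : ℂ := if m < 0 then 0 else 1 / qPoch x x m.toNat

lemma rr_neg (x : ℂ) {m : ℤ} (h : m < 0) : rr x m = 0 := by simp [rr, h]

lemma rr_nat (x : ℂ) (m : ℕ) : rr x m = 1 / qPoch x x m := by simp [rr]

lemma rr_rec {x : ℂ} (hx : ‖x‖ < 1) (m : ℤ) : rr x (m-1) = (1 - x ^ m) * rr x m := by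
  rcases lt_trichotomy m 0 with h | h | h
  · rw [rr_neg x h, rr_neg x (by omega)]; simp
  · subst h; rw [rr_neg x (by omega)]; simp
  · obtain ⟨n, rfl⟩ : ∃ n : ℕ, m = (n : ℤ) + 1 := ⟨(m-1).toNat, by omega⟩
    have e : (n : ℤ) + 1 = ((n+1 : ℕ) : ℤ) := by push_cast; rfl
    rw [add_sub_cancel_right, rr_nat, e, rr_nat, qPoch_succ, zpow_natCast]
    have h1 := qPoch_ne hx hx n
    have h2 : 1 - x * x ^ n ≠ 0 := sub_ne_zero.2 (ne_one_aux hx hx n).symm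
    field_simp
    ring

lemma rr_bound {x : ℂ} (hx : ‖x‖ < 1) : ∃ C : ℝ, 0 < C ∧ ∀ m, ‖rr x m‖ ≤ C := by
  have h := ((qPoch_tendsto x hx).inv₀ (qPochInf_ne hx hx)).norm
  obtain ⟨C, hC⟩ := h.bddAbove_range
  refine ⟨max C 1, by positivity, fun m => ?_⟩
  rcases lt_or_ge m 0 with h | h
  · rw [rr_neg x h]; simp
  · lift m to ℕ using h
    rw [rr_nat, one_div]
    exact (hC ⟨m, rfl⟩).trans (le_max_left _ _)

lemma rr_tendsto {x : ℂ} (hx : ‖x‖ < 1) {f : ℕ → ℤ} (hf : Tendsto f atTop atTop) :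
    Tendsto (fun n => rr x (f n)) atTop (𝓝 (1 / qPochInf x x)) := by
  have h0 : Tendsto (fun m : ℤ => rr x m) atTop (𝓝 (1 / qPochInf x x)) := by
    have h := ((qPoch_tendsto x hx).inv₀ (qPochInf_ne hx hx))
    have h2 := h.comp (tendsto_atTop_atTop.2 fun b : ℕ => ⟨(b : ℤ), fun a h => by omega⟩ :
      Tendsto Int.toNat atTop atTop)
    rw [one_div]
    refine h2.congr' ?_
    filter_upwards [eventually_ge_atTop 0] with m hm
    lift m to ℕ using hm
    rw [rr_nat]; simp
  exact h0.comp hf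

/-- finite support sums -/
lemma summable_rr (x : ℂ) (f : ℤ → ℂ) (a b : ℤ) :
    Summable (fun j : ℤ => f j * (rr x (a - j) * rr x (b + j))) := by
  refine summable_of_ne_finset_zero (s := Finset.Icc (-b) a) fun j hj => ?_
  rw [Finset.mem_Icc, not_and_or] at hj
  rcases hj with h | h
  · rw [rr_neg x (show b + j < 0 by omega)]; simp
  · rw [rr_neg x (show a - j < 0 by omega)]; simp

lemma tsum_shift (f : ℤ → ℂ) (c : ℤ) : ∑' j, f (j + c) = ∑' j, f j :=
  (Equiv.addRight c).tsum_eq f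

lemma tsum_refl (f : ℤ → ℂ) (c : ℤ) : ∑' j, f (c - j) = ∑' j, f j :=
  (Equiv.subLeft c).tsum_eq f

lemma tsum_three {A B C F : ℤ → ℂ} (hA : Summable A) (hB : Summable B) (hC : Summable C)
    (h : ∀ j, F j = A j + B (j+1) + C (j-1)) : ∑' j, F j = ∑' j, (A j + B j + C j) := by
  have hB' : Summable (fun j => B (j+1)) := (Equiv.addRight (1:ℤ)).summable_iff.2 hB
  have hC' : Summable (fun j => C (j-1)) := (Equiv.subRight (1:ℤ)).summable_iff.2 hC
  have t3 : ∑' j, C (j-1) = ∑' j, C j := (Equiv.subRight (1:ℤ)).tsum_eq C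
  rw [tsum_congr h, (hA.add hB').tsum_add hC', hA.tsum_add hB', (hA.add hB).tsum_add hC,
    hA.tsum_add hB, tsum_shift, t3]

/-- three-term recurrence for `1/((x)_{n-j}(x)_{n+s+j})` -/
lemma bb_rec {x : ℂ} (hx0 : x ≠ 0) (hx : ‖x‖ < 1) (n s j : ℤ) :
    (1 - x ^ (2*n+s+1)) * (1 - x ^ (2*n+s+2)) * (rr x (n+1-j) * rr x (n+1+s+j))
      = (1 + x ^ (2*n+s+1)) * (rr x (n-j) * rr x (n+s+j))
        + x ^ (n+s+1+j) * (rr x (n-(j+1)) * rr x (n+s+(j+1)))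
        + x ^ (n+1-j) * (rr x (n-(j-1)) * rr x (n+s+(j-1))) := by
  have a1 : rr x (n-j) = (1 - x^(n+1-j)) * rr x (n+1-j) := by
    rw [← rr_rec hx]; congr 1; ring
  have a2 : rr x (n-(j+1)) = (1 - x^(n-j)) * ((1 - x^(n+1-j)) * rr x (n+1-j)) := by
    rw [← a1, ← rr_rec hx]; congr 1; ring
  have a3 : rr x (n-(j-1)) = rr x (n+1-j) := by congr 1; ring
  have b1 : rr x (n+s+j) = (1 - x^(n+1+s+j)) * rr x (n+1+s+j) := by
    rw [← rr_rec hx]; congr 1; ring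
  have b2 : rr x (n+s+(j-1)) = (1 - x^(n+s+j)) * ((1 - x^(n+1+s+j)) * rr x (n+1+s+j)) := by
    rw [← b1, ← rr_rec hx]; congr 1; ring
  have b3 : rr x (n+s+(j+1)) = rr x (n+1+s+j) := by congr 1; ring
  rw [a2, a3, b2, b3, a1, b1]
  generalize rr x (n+1-j) = u
  generalize rr x (n+1+s+j) = v
  have e1 : x ^ (2*n+s+1) = x^(n-j) * x^(n+s+j) * x := by
    rw [← zpow_add₀ hx0, ← zpow_add_one₀ hx0]; congr 1; ring
  have e2 : x ^ (2*n+s+2) = x^(n-j) * x^(n+s+j) * x * x := by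
    rw [← zpow_add₀ hx0, ← zpow_add_one₀ hx0, ← zpow_add_one₀ hx0]; congr 1; ring
  have e3 : x ^ (n+s+1+j) = x^(n+s+j) * x := by
    rw [← zpow_add_one₀ hx0]; congr 1; ring
  have e4 : x ^ (n+1+s+j) = x^(n+s+j) * x := by
    rw [← zpow_add_one₀ hx0]; congr 1; ring
  have e5 : x ^ (n+1-j) = x^(n-j) * x := by
    rw [← zpow_add_one₀ hx0]; congr 1; ring
  rw [e1, e2, e3, e4, e5]
  ring

lemma bb_step {x : ℂ} (hx0 : x ≠ 0) (hx : ‖x‖ < 1) (w : ℤ → ℂ) (n : ℤ) :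
    (1 - x ^ (2*n+1)) * (1 - x ^ (2*n+2)) * ∑' j, w j * (rr x (n+1-j) * rr x (n+1+j))
     = ∑' j, (w j * (1 + x^(2*n+1)) + w (j-1) * x^(n+j) + w (j+1) * x^(n-j))
         * (rr x (n-j) * rr x (n+j)) := by
  have s1 := summable_rr x (fun j => w j * (1 + x^(2*n+1))) n n
  have s2 := summable_rr x (fun j => w (j-1) * x^(n+j)) n n
  have s3 := summable_rr x (fun j => w (j+1) * x^(n-j)) n n
  rw [← tsum_mul_left]
  refine (tsum_three s1 s2 s3 fun j => ?_).trans (tsum_congr fun j => by ring)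
  have h := bb_rec hx0 hx n 0 j
  simp only [add_zero] at h
  simp only [add_sub_cancel_right, sub_add_cancel]
  have e1 : n + (j+1) = n+1+j := by ring
  have e2 : n - (j-1) = n+1-j := by ring
  rw [mul_left_comm, h, e1, e2]
  ring

/-- weights `(-1)^j z^j x^{j(j-1)/2}` -/
noncomputable def tt (z x : ℂ) (j : ℤ) : ℂ := z ^ j * x ^ (j * (j-1) / 2)

lemma tri_succ (j : ℤ) : (j+1) * (j+1-1) / 2 = j * (j-1) / 2 + j := by
  rw [show (j+1) * (j+1-1) = j * (j-1) + j * 2 by ring, Int.add_mul_ediv_right _ _ two_ne_zero]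

lemma tt_succ {z x : ℂ} (hz : z ≠ 0) (hx0 : x ≠ 0) (j : ℤ) :
    tt z x (j+1) = z * x^j * tt z x j := by
  rw [tt, tt, tri_succ, zpow_add₀ hx0, zpow_add_one₀ hz]; ring

lemma tt_pred {z x : ℂ} (hz : z ≠ 0) (hx0 : x ≠ 0) (j : ℤ) :
    tt z x (j-1) = z⁻¹ * (x^j)⁻¹ * x * tt z x j := by
  have h := tt_succ hz hx0 (j-1)
  rw [sub_add_cancel] at h
  rw [h, zpow_sub_one₀ hx0]
  have : x^j ≠ 0 := zpow_ne_zero _ hx0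
  field_simp

lemma tt_ne {z x : ℂ} (hz : z ≠ 0) (hx0 : x ≠ 0) (j : ℤ) : tt z x j ≠ 0 :=
  mul_ne_zero (zpow_ne_zero _ hz) (zpow_ne_zero _ hx0)

lemma tt_summable_nat {z x : ℂ} (hz : z ≠ 0) (hx0 : x ≠ 0) (hx : ‖x‖ < 1) :
    Summable (fun n : ℕ => tt z x n) := by
  refine summable_of_ratio_test_tendsto_lt_one (l := 0) one_pos
    (Eventually.of_forall fun n => tt_ne hz hx0 _) ?_
  have h : Tendsto (fun n : ℕ => ‖z‖ * ‖x‖^n) atTop (𝓝 (‖z‖ * 0)) :=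
    (tendsto_pow_atTop_nhds_zero_of_lt_one (norm_nonneg _) hx).const_mul _
  rw [mul_zero] at h
  refine h.congr fun n => ?_
  have h1 : ‖tt z x n‖ ≠ 0 := norm_ne_zero_iff.2 (tt_ne hz hx0 _)
  rw [Nat.cast_succ, tt_succ hz hx0, norm_mul, mul_div_cancel_right₀ _ h1]
  simp

lemma tt_neg {z x : ℂ} (hx0 : x ≠ 0) (j : ℤ) :
    tt z x (-j) = tt (x/z) x j := by
  rw [tt, tt, show -j * (-j-1) = j*(j-1) + j * 2 by ring,
    Int.add_mul_ediv_right _ _ two_ne_zero, zpow_add₀ hx0, div_zpow, zpow_neg]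
  ring

lemma tt_summable {z x : ℂ} (hz : z ≠ 0) (hx0 : x ≠ 0) (hx : ‖x‖ < 1) :
    Summable (fun j : ℤ => tt z x j) := by
  refine Summable.of_nat_of_neg (tt_summable_nat hz hx0 hx) ?_
  simp only [tt_neg hx0]
  exact tt_summable_nat (div_ne_zero hx0 hz) hx0 hx

lemma rr_zero (x : ℂ) : rr x 0 = 1 := by simp [rr, qPoch]

lemma tsum_zero_level (x : ℂ) (f : ℤ → ℂ) : ∑' j : ℤ, f j * (rr x (0-j) * rr x (0+j)) = f 0 := by
  rw [tsum_eq_single 0]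
  · simp [rr_zero]
  · intro j hj
    rcases lt_or_gt_of_ne hj with h | h
    · rw [rr_neg x (show 0 + j < 0 by omega)]; simp
    · rw [rr_neg x (show 0 - j < 0 by omega)]; simp

lemma tendsto_int_add (c : ℤ) : Tendsto (fun n : ℕ => (n:ℤ) + c) atTop atTop :=
  tendsto_atTop_add_const_right _ _ tendsto_natCast_atTop_atTop

/-- finite Jacobi triple product -/
lemma jtp_fin {z x : ℂ} (hz : z ≠ 0) (hx0 : x ≠ 0) (hx : ‖x‖ < 1) (n : ℕ) :
    ∑' j : ℤ, tt (-z) x j * (rr x (n-j) * rr x (n+j))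
      = qPoch z x n * qPoch (x/z) x n / qPoch x x (2*n) := by
  induction n with
  | zero =>
    have := tsum_zero_level x (tt (-z) x)
    simp only [Nat.cast_zero, this]
    simp [tt, qPoch]
  | succ n ih =>
    have h := bb_step hx0 hx (tt (-z) x) n
    have e : ∀ j : ℤ, (tt (-z) x j * (1 + x^(2*(n:ℤ)+1)) + tt (-z) x (j-1) * x^((n:ℤ)+j)
        + tt (-z) x (j+1) * x^((n:ℤ)-j)) * (rr x (n-j) * rr x (n+j))
        = ((1 - z * x^n) * (1 - x/z * x^n)) * (tt (-z) x j * (rr x (n-j) * rr x (n+j))) := by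
      intro j
      rw [tt_succ (neg_ne_zero.2 hz) hx0, tt_pred (neg_ne_zero.2 hz) hx0]
      rw [zpow_add_one₀ hx0, two_mul, zpow_add₀ hx0, zpow_sub₀ hx0, zpow_add₀ hx0, zpow_natCast]
      have : x^j ≠ 0 := zpow_ne_zero _ hx0
      field_simp
      ring
    simp only [e, tsum_mul_left, ih] at h
    have h1 := ne_one_aux hx hx (2*n)
    have h2 := ne_one_aux hx hx (2*n+1)
    have e1 : x ^ (2*(n:ℤ)+1) = x * x^(2*n) := by
      rw [zpow_add_one₀ hx0]; norm_cast; ring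
    have e2 : x ^ (2*(n:ℤ)+2) = x * x^(2*n+1) := by
      norm_cast; ring
    rw [e1, e2] at h
    have h1' := sub_ne_zero.2 h1.symm
    have h2' := sub_ne_zero.2 h2.symm
    rw [show 2*(n+1) = 2*n+1+1 by ring, qPoch_succ, qPoch_succ, qPoch_succ, qPoch_succ]
    push_cast
    have h3 := qPoch_ne hx hx (2*n)
    rw [eq_div_iff (by positivity)]
    rw [show ∀ S : ℂ, S * (qPoch x x (2*n) * (1 - x * x^(2*n)) * (1 - x*x^(2*n+1)))
      = (1 - x * x^(2*n)) * (1 - x*x^(2*n+1)) * S * qPoch x x (2*n) by intro S; ring, h]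
    field_simp

/-- Jacobi triple product -/
lemma jtp {z x : ℂ} (hz : z ≠ 0) (hx0 : x ≠ 0) (hx : ‖x‖ < 1) :
    ∑' j : ℤ, tt (-z) x j = qPochInf z x * qPochInf (x/z) x * qPochInf x x := by
  obtain ⟨C, hC0, hC⟩ := rr_bound hx
  have hne := qPochInf_ne hx hx
  have L : Tendsto (fun n : ℕ => ∑' j : ℤ, tt (-z) x j * (rr x (n-j) * rr x (n+j))) atTop
      (𝓝 (∑' j : ℤ, tt (-z) x j * (1 / qPochInf x x * (1 / qPochInf x x)))) := by
    refine tendsto_tsum_of_dominated_convergence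
      (bound := fun j => ‖tt (-z) x j‖ * (C * C))
      ((tt_summable (neg_ne_zero.2 hz) hx0 hx).norm.mul_right _) ?_ ?_
    · intro j
      refine ((rr_tendsto hx ?_).mul (rr_tendsto hx ?_)).const_mul _
      · exact tendsto_int_add (-j)
      · exact tendsto_int_add j
    · refine Eventually.of_forall fun n j => ?_
      rw [norm_mul, norm_mul]
      gcongr <;> apply hC
  have R : Tendsto (fun n : ℕ => qPoch z x n * qPoch (x/z) x n / qPoch x x (2*n)) atTop
      (𝓝 (qPochInf z x * qPochInf (x/z) x / qPochInf x x)) := by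
    refine ((qPoch_tendsto z hx).mul (qPoch_tendsto _ hx)).div ?_ hne
    exact (qPoch_tendsto x hx).comp (tendsto_id.const_mul_atTop' two_pos)
  have := tendsto_nhds_unique L (R.congr fun n => (jtp_fin hz hx0 hx n).symm)
  rw [tsum_mul_right] at this
  field_simp at this
  rw [this]; ring

/-- finite q-binomial -/
lemma qbin_fin {z x : ℂ} (hz : z ≠ 0) (hx0 : x ≠ 0) (hx : ‖x‖ < 1) (n : ℕ) :
    ∑' j : ℤ, tt z x j * (rr x (n-j) * rr x (0+j))
      = qPoch (-z) x n / qPoch x x n := by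
  induction n with
  | zero =>
    have := tsum_zero_level x (tt z x)
    simp only [Nat.cast_zero, this]
    simp [tt, qPoch]
  | succ n ih =>
    have s1 := summable_rr x (tt z x) n 0
    have s2 := s1.mul_left (z * x^n)
    have key : (1 - x * x^n) * ∑' j : ℤ, tt z x j * (rr x ((n+1:ℕ)-j) * rr x (0+j))
        = (1 + z * x^n) * ∑' j : ℤ, tt z x j * (rr x (n-j) * rr x (0+j)) := by
      rw [← tsum_mul_left, ← tsum_mul_left]
      refine (tsum_three s1 summable_zero s2 fun j => ?_).trans (tsum_congr fun j => by ring)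
      rw [tt_pred hz hx0]
      have e1 : rr x (n-j) = (1 - x^((n:ℤ)+1-j)) * rr x (n+1-j) := by
        rw [← rr_rec hx]; congr 1; ring
      have e2 : rr x (0+(j-1)) = (1 - x^j) * rr x (0+j) := by
        rw [zero_add, zero_add, ← rr_rec hx]
      have e3 : (n:ℤ) - (j-1) = n+1-j := by ring
      rw [e3, e1, e2, zpow_sub₀ hx0, zpow_add_one₀ hx0, zpow_natCast]
      push_cast
      have : x^j ≠ 0 := zpow_ne_zero _ hx0
      field_simp
      ring
    rw [ih] at key
    have h1' := sub_ne_zero.2 (ne_one_aux hx hx n).symm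
    have h3 := qPoch_ne hx hx n
    rw [qPoch_succ, qPoch_succ, eq_div_iff (mul_ne_zero h3 h1')]
    rw [mul_comm (qPoch x x n), ← mul_assoc, mul_comm _ (1 - x * x^n), key]
    field_simp
    ring

/-- Euler's identity -/
lemma euler_id {z x : ℂ} (hz : z ≠ 0) (hx0 : x ≠ 0) (hx : ‖x‖ < 1) :
    ∑' n : ℕ, tt z x n / qPoch x x n = qPochInf (-z) x := by
  obtain ⟨C, hC0, hC⟩ := rr_bound hx
  have hne := qPochInf_ne hx hx
  have L : Tendsto (fun n : ℕ => ∑' j : ℤ, tt z x j * (rr x (n-j) * rr x (0+j))) atTop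
      (𝓝 (∑' j : ℤ, tt z x j * (1 / qPochInf x x * rr x (0+j)))) := by
    refine tendsto_tsum_of_dominated_convergence
      (bound := fun j => ‖tt z x j‖ * (C * C))
      ((tt_summable hz hx0 hx).norm.mul_right _) ?_ ?_
    · intro j
      refine ((rr_tendsto hx ?_).mul_const _).const_mul _
      exact tendsto_int_add (-j)
    · refine Eventually.of_forall fun n j => ?_
      rw [norm_mul, norm_mul]
      gcongr <;> apply hC
  have R : Tendsto (fun n : ℕ => qPoch (-z) x n / qPoch x x n) atTop
      (𝓝 (qPochInf (-z) x / qPochInf x x)) :=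
    (qPoch_tendsto _ hx).div (qPoch_tendsto x hx) hne
  have := tendsto_nhds_unique L (R.congr fun n => (qbin_fin hz hx0 hx n).symm)
  have e : ∀ j : ℤ, tt z x j * (1 / qPochInf x x * rr x (0+j))
      = 1 / qPochInf x x * (tt z x j * rr x j) := by intro j; rw [zero_add]; ring
  simp only [e, tsum_mul_left] at this
  have h2 : ∑' n : ℕ, tt z x n / qPoch x x n = ∑' j : ℤ, tt z x j * rr x j := by
    rw [← Function.Injective.tsum_eq (g := ((↑) : ℕ → ℤ)) Nat.cast_injective]
    · refine tsum_congr fun n => ?_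
      rw [rr_nat]; ring
    · intro j hj
      by_contra h
      apply hj
      have : j < 0 := by
        by_contra h'
        exact h ⟨j.toNat, by omega⟩
      simp [rr_neg x this]
  rw [h2]
  field_simp at this
  exact this

lemma euler_summable {z x : ℂ} (hz : z ≠ 0) (hx0 : x ≠ 0) (hx : ‖x‖ < 1) :
    Summable (fun n : ℕ => ‖tt z x n / qPoch x x n‖) := by
  obtain ⟨C, hC0, hC⟩ := rr_bound hx
  refine Summable.of_nonneg_of_le (fun _ => norm_nonneg _) (fun n => ?_)
    ((tt_summable_nat hz hx0 hx).norm.mul_right C)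
  have := hC n
  rw [rr_nat, one_div] at this
  rw [div_eq_mul_inv, norm_mul]
  gcongr

noncomputable def DD (x : ℂ) (s : ℕ) : ℂ :=
  ∑' m : ℕ, x^(m^2+s*m) * (rr x m * rr x ((m:ℤ)+s))

lemma DD_bound {x : ℂ} (hx : ‖x‖ < 1) {C : ℝ} (hC : ∀ m, ‖rr x m‖ ≤ C)
    (s m : ℕ) (a b : ℤ) : ‖x^(m^2+s*m) * (rr x a * rr x b)‖ ≤ ‖x‖^m * (C * C) := by
  have hC0 : 0 ≤ C := (norm_nonneg _).trans (hC 0)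
  rw [norm_mul, norm_mul, norm_pow]
  refine mul_le_mul ?_ (mul_le_mul (hC _) (hC _) (norm_nonneg _) hC0) (by positivity) (by positivity)
  exact pow_le_pow_of_le_one (norm_nonneg _) hx.le (by nlinarith [Nat.le_self_pow two_ne_zero m])

lemma geo_sum {x : ℂ} (hx : ‖x‖ < 1) (K : ℝ) : Summable (fun m : ℕ => ‖x‖^m * K) :=
  (summable_geometric_of_lt_one (norm_nonneg _) hx).mul_right _

lemma DD_summable {x : ℂ} (hx : ‖x‖ < 1) (s : ℕ) (a b : ℕ → ℤ) :
    Summable (fun m : ℕ => x^(m^2+s*m) * (rr x (a m) * rr x (b m))) := by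
  obtain ⟨C, hC0, hC⟩ := rr_bound hx
  exact Summable.of_norm_bounded (geo_sum hx (C*C)) fun m => DD_bound hx hC s m _ _

lemma DD_rec {x : ℂ} (hx : ‖x‖ < 1) (s : ℕ) :
    DD x s - DD x (s+1) = x^(s+1) * (DD x (s+2) - DD x (s+1)) := by
  have e0 : DD x (s+2) * x^(s+1) = ∑' m : ℕ, x^(m^2+s*m) * (1 - x^m) *
      (rr x m * rr x ((m:ℤ)+s+1)) := by
    have hs : Summable (fun m : ℕ => x^(m^2+s*m) * (1 - x^m) *
        (rr x m * rr x ((m:ℤ)+s+1))) := by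
      have h1 := DD_summable hx s (fun m => m) (fun m => (m:ℤ)+s+1)
      have h2 := DD_summable hx (s+1) (fun m => m) (fun m => (m:ℤ)+s+1)
      refine (h1.sub h2).congr fun m => ?_
      ring
    rw [hs.tsum_eq_zero_add, DD, ← tsum_mul_right]
    simp only [pow_zero, sub_self, mul_zero, zero_mul, zero_add]
    refine tsum_congr fun m => ?_
    have h := rr_rec hx ((m:ℤ)+1)
    rw [add_sub_cancel_right] at h
    rw [h]
    have e : (m:ℤ) + ((s+2:ℕ):ℤ) = ((m+1:ℕ):ℤ)+s+1 := by push_cast; ring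
    rw [e]
    have e2 : (m:ℤ)+1 = ((m+1:ℕ):ℤ) := by push_cast; ring
    rw [e2, zpow_natCast]
    ring
  have e1 : DD x s = ∑' m : ℕ, (x^(m^2+s*m) * (1 - x^m) * (rr x m * rr x ((m:ℤ)+s+1))
      + (1 - x^(s+1)) * (x^(m^2+(s+1)*m) * (rr x m * rr x ((m:ℤ)+(s+1:ℕ))))) := by
    refine tsum_congr fun m => ?_
    have h := rr_rec hx ((m:ℤ)+s+1)
    rw [add_sub_cancel_right] at h
    have e : (m:ℤ) + ((s+1:ℕ):ℤ) = (m:ℤ)+s+1 := by push_cast; ring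
    have e2 : x ^ ((m:ℤ)+s+1) = x^(m+s+1) := by norm_cast
    rw [h, e, e2]
    ring
  have hs : Summable (fun m : ℕ => x^(m^2+s*m) * (1 - x^m) *
        (rr x m * rr x ((m:ℤ)+s+1))) := by
    have h1 := DD_summable hx s (fun m => m) (fun m => (m:ℤ)+s+1)
    have h2 := DD_summable hx (s+1) (fun m => m) (fun m => (m:ℤ)+s+1)
    refine (h1.sub h2).congr fun m => ?_
    ring
  have h3 := (DD_summable hx (s+1) (fun m => m) (fun m => (m:ℤ)+(s+1:ℕ)))
  rw [hs.tsum_add (h3.mul_left _), tsum_mul_left, ← e0] at e1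
  change DD x s = _ + _ * DD x (s+1) at e1
  rw [e1]; ring

lemma DD_const {x : ℂ} (hx : ‖x‖ < 1) (s : ℕ) : DD x s = DD x (s+1) := by
  obtain ⟨C, hC0, hC⟩ := rr_bound hx
  set K := ∑' m : ℕ, ‖x‖^m * (C * C)
  have hK : ∀ s, ‖DD x s‖ ≤ K := fun s =>
    tsum_of_norm_bounded (geo_sum hx (C*C)).hasSum fun m => DD_bound hx hC s m _ _
  have h1 : ∀ s, ‖DD x s - DD x (s+1)‖ ≤ ‖x‖ * ‖DD x (s+1) - DD x (s+2)‖ := by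
    intro s
    rw [DD_rec hx s, norm_mul, norm_pow, norm_sub_rev (DD x (s+2))]
    gcongr
    exact (pow_le_pow_of_le_one (norm_nonneg _) hx.le (by omega)).trans_eq (pow_one _)
  have h2 : ∀ n s, ‖DD x s - DD x (s+1)‖ ≤ ‖x‖^n * (2*K) := by
    intro n
    induction n with
    | zero => intro s; have := norm_sub_le (DD x s) (DD x (s+1)); linarith [hK s, hK (s+1)]
    | succ n ih =>
      intro s
      refine (h1 s).trans ?_
      rw [pow_succ', mul_assoc]
      gcongr
      exact ih (s+1)
  have h3 : Tendsto (fun n : ℕ => ‖x‖^n * (2*K)) atTop (𝓝 (0 * (2*K))) :=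
    (tendsto_pow_atTop_nhds_zero_of_lt_one (norm_nonneg _) hx).mul_const _
  rw [zero_mul] at h3
  have := ge_of_tendsto' h3 (fun n => h2 n s)
  exact sub_eq_zero.1 (norm_le_zero_iff.1 this)

lemma DD_eq {x : ℂ} (hx : ‖x‖ < 1) (s : ℕ) : DD x s = 1 / qPochInf x x := by
  obtain ⟨C, hC0, hC⟩ := rr_bound hx
  have hc : ∀ n, DD x n = DD x 0 := by
    intro n
    induction n with
    | zero => rfl
    | succ n ih => rw [← DD_const hx, ih]
  have L : Tendsto (fun n => DD x n) atTop
      (𝓝 (∑' m : ℕ, if m = 0 then 1 / qPochInf x x else 0)) := by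
    refine tendsto_tsum_of_dominated_convergence (geo_sum hx (C*C)) ?_
      (Eventually.of_forall fun n m => DD_bound hx hC n m _ _)
    intro m
    by_cases hm : m = 0
    · subst hm
      simp only [if_true]
      have := rr_tendsto hx (tendsto_int_add 0)
      refine this.congr fun n => ?_
      simp [rr_zero]
    · simp only [hm, if_false]
      have h0 : Tendsto (fun n : ℕ => ‖x‖^n * (C*C)) atTop (𝓝 (0 * (C*C))) :=
        (tendsto_pow_atTop_nhds_zero_of_lt_one (norm_nonneg _) hx).mul_const _
      rw [zero_mul] at h0
      refine squeeze_zero_norm (fun n => ?_) h0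
      rw [norm_mul, norm_mul, norm_pow]
      refine mul_le_mul ?_ (mul_le_mul (hC _) (hC _) (norm_nonneg _) hC0.le) (by positivity)
        (by positivity)
      refine pow_le_pow_of_le_one (norm_nonneg _) hx.le ?_
      have : 1 ≤ m := Nat.one_le_iff_ne_zero.2 hm
      nlinarith
  have := tendsto_nhds_unique L (tendsto_const_nhds.congr fun n => (hc n).symm)
  rw [hc s, ← this]
  simp

lemma durfee_nat {x : ℂ} (hx : ‖x‖ < 1) (s k : ℕ) :
    ∑' n : ℕ, x^(n^2+s*n) * (rr x (n-k) * rr x ((n:ℤ)+s+k)) = x^(k^2+s*k) / qPochInf x x := by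
  rw [← Function.Injective.tsum_eq (g := fun m : ℕ => m + k) (add_left_injective k)]
  · rw [div_eq_mul_one_div, ← DD_eq hx (2*k+s), DD, ← tsum_mul_left]
    refine tsum_congr fun m => ?_
    have e1 : ((m+k:ℕ):ℤ) - k = m := by push_cast; ring
    have e2 : ((m+k:ℕ):ℤ) + s + k = m + (2*k+s:ℕ) := by push_cast; ring
    rw [e1, e2]
    ring
  · intro n hn
    by_contra h
    apply hn
    have : n < k := by
      by_contra h'
      exact h ⟨n-k, by simp only []; omega⟩
    simp only []
    rw [rr_neg x (show (n:ℤ)-k < 0 by omega)]; simp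

lemma durfee {x : ℂ} (hx : ‖x‖ < 1) {s : ℕ} (hs : s ≤ 1) (r : ℤ) :
    ∑' n : ℕ, x^(n^2+s*n) * (rr x (n-r) * rr x ((n:ℤ)+s+r)) = x^(r^2+s*r) / qPochInf x x := by
  rcases lt_or_ge r 0 with h | h
  · obtain ⟨k, hk⟩ : ∃ k : ℕ, (k:ℤ) = -s-r := ⟨(-s-r).toNat, by omega⟩
    have hr : r = -s-k := by omega
    have := durfee_nat hx s k
    have e : x^(r^2+s*r) = x^(k^2+s*k) := by
      rw [← zpow_natCast]; congr 1; push_cast; rw [hr]; ring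
    rw [e, ← this]
    refine tsum_congr fun n => ?_
    have e1 : (n:ℤ)-r = n+s+k := by rw [hr]; ring
    have e2 : (n:ℤ)+s+r = n-k := by rw [hr]; ring
    rw [e1, e2]; ring
  · lift r to ℕ using h
    rw [durfee_nat hx]
    norm_cast

lemma natAbs_summable {σ : ℝ} (h0 : 0 ≤ σ) (h1 : σ < 1) : Summable (fun j : ℤ => σ ^ j.natAbs) := by
  refine Summable.of_nat_of_neg ?_ ?_ <;> simpa using summable_geometric_of_lt_one h0 h1

lemma natAbs_summable2 {σ : ℝ} (h0 : 0 ≤ σ) (h1 : σ < 1) {φ : ℤ → ℤ}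
    (hφ : Function.Injective φ) :
    Summable (fun p : ℕ × ℤ => σ^p.1 * σ^(φ p.2).natAbs) :=
  Summable.mul_of_nonneg (f := fun n : ℕ => σ^n) (g := fun m : ℤ => σ^(φ m).natAbs)
    (summable_geometric_of_lt_one h0 h1)
      ((natAbs_summable h0 h1).comp_injective hφ) (fun n => pow_nonneg h0 n)
      (fun _ => pow_nonneg h0 _)

lemma bailey_summable {x : ℂ} (hx0 : x ≠ 0) (hx : ‖x‖ < 1) {s : ℕ} (hs : s ≤ 1) {u : ℤ → ℂ}
    (hu : ∀ m, ‖u m‖ ≤ 1) {φ : ℤ → ℤ} (hφ : Function.Injective φ) :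
    Summable (fun p : ℕ × ℤ => u p.2 *
      (x^(p.1^2+s*p.1) * (rr x (p.1-φ p.2) * rr x ((p.1:ℤ)+s+φ p.2)))) := by
  obtain ⟨C, hC0, hC⟩ := rr_bound hx
  set σ := √‖x‖ with hσ
  have hp : 0 < ‖x‖ := norm_pos_iff.2 hx0
  have σ0 : 0 < σ := Real.sqrt_pos.2 hp
  have σ1 : σ < 1 := by rw [hσ, Real.sqrt_lt' one_pos]; simpa using hx
  have σ2 : ‖x‖ = σ^2 := (Real.sq_sqrt hp.le).symm
  have hsum := natAbs_summable2 σ0.le σ1 hφ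
  clear_value σ
  refine Summable.of_norm_bounded (hsum.mul_left (C * C * σ⁻¹)) ?_
  rintro ⟨n, m⟩
  simp only []
  by_cases h : φ m ≤ n ∧ -(n+s:ℤ) ≤ φ m
  · have key : ‖x‖^(n^2+s*n) ≤ σ⁻¹ * (σ^n * σ^(φ m).natAbs) := by
      rw [← pow_add, le_inv_mul_iff₀ σ0, σ2, ← pow_mul, ← pow_succ']
      refine pow_le_pow_of_le_one σ0.le σ1.le ?_
      have : (φ m).natAbs ≤ n + s := by omega
      have h2 : n ≤ n^2 := Nat.le_self_pow two_ne_zero n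
      rcases Nat.le_one_iff_eq_zero_or_eq_one.1 hs with rfl | rfl <;> nlinarith
    rw [norm_mul, norm_mul, norm_mul, norm_pow]
    calc ‖u m‖ * (‖x‖^(n^2+s*n) * (‖rr x (n-φ m)‖ * ‖rr x ((n:ℤ)+s+φ m)‖))
        ≤ 1 * ((σ⁻¹ * (σ^n * σ^(φ m).natAbs)) * (C * C)) := by
          gcongr
          · exact hu m
          · apply hC
          · apply hC
      _ = _ := by ring
  · have : rr x (n-φ m) * rr x ((n:ℤ)+s+φ m) = 0 := by
      rw [not_and_or] at h
      rcases h with h | h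
      · rw [rr_neg x (show (n:ℤ)-φ m < 0 by omega)]; simp
      · rw [rr_neg x (show (n:ℤ)+s+φ m < 0 by omega)]; simp
    rw [this]; simp only [mul_zero, norm_zero]; positivity

lemma bailey {x : ℂ} (hx0 : x ≠ 0) (hx : ‖x‖ < 1) {s : ℕ} (hs : s ≤ 1) {u : ℤ → ℂ}
    (hu : ∀ m, ‖u m‖ ≤ 1) {φ : ℤ → ℤ} (hφ : Function.Injective φ) :
    HasSum (fun n : ℕ => x^(n^2+s*n) * ∑' m : ℤ, u m * (rr x (n-φ m) * rr x ((n:ℤ)+s+φ m)))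
      ((∑' m : ℤ, u m * x^((φ m)^2+s*φ m)) / qPochInf x x) := by
  have S := bailey_summable hx0 hx hs hu hφ
  have e : ∀ n : ℕ, x^(n^2+s*n) * ∑' m : ℤ, u m * (rr x (n-φ m) * rr x ((n:ℤ)+s+φ m))
      = ∑' m : ℤ, u m * (x^(n^2+s*n) * (rr x (n-φ m) * rr x ((n:ℤ)+s+φ m))) := by
    intro n
    rw [← tsum_mul_left]
    exact tsum_congr fun m => by ring
  simp only [e]
  have h1 := S.prod
  simp only [] at h1
  have h2 := Summable.tsum_comm (f := fun (n : ℕ) (m : ℤ) => u m * (x^(n^2+s*n) *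
    (rr x (n-φ m) * rr x ((n:ℤ)+s+φ m)))) S
  have h3 := h1.hasSum
  rw [← h2] at h3
  have e3 : (∑' m : ℤ, u m * x^((φ m)^2+s*φ m)) / qPochInf x x
      = ∑' (m : ℤ) (n : ℕ), u m * (x^(n^2+s*n) * (rr x (n-φ m) * rr x ((n:ℤ)+s+φ m))) := by
    rw [← tsum_div_const]
    refine tsum_congr fun m => ?_
    rw [tsum_mul_left, durfee hx hs, mul_div_assoc]
  rw [e3]
  exact h3

lemma sq_zpow (q : ℂ) (j : ℤ) : (q^2)^j = (q^j)^2 := by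
  rw [sq, sq, mul_zpow]

lemma tt_norm_le {q : ℂ} (h1 : ‖q‖ < 1) (j : ℤ) (h0 : q ≠ 0) : ‖tt (-q) q j‖ ≤ 1 := by
  rw [tt, neg_eq_neg_one_mul, mul_zpow, mul_assoc, ← zpow_add₀ h0, norm_mul, norm_zpow, norm_zpow]
  simp only [norm_neg, norm_one, one_zpow, one_mul]
  have h : 0 ≤ j + j*(j-1)/2 := by
    obtain ⟨d, hd⟩ : ∃ d, j*(j-1) = 2 * d := (Int.even_mul_pred_self j).two_dvd
    rw [hd, Int.mul_ediv_cancel_left _ two_ne_zero]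
    rcases lt_or_ge j 0 with h | h <;> nlinarith
  lift j + j*(j-1)/2 to ℕ using h with k
  rw [zpow_natCast]
  exact pow_le_one₀ (norm_nonneg _) h1.le

lemma tt_mul_pow {q : ℂ} (j : ℤ) : tt (-q) q j = q^j * tt (-1) q j := by
  rw [tt, tt, neg_eq_neg_one_mul, mul_zpow]; ring

lemma tt_refl0 {q : ℂ} (h0 : q ≠ 0) (j : ℤ) : tt (-q) q (-j) = (q^j)⁻¹ * tt (-q) q j := by
  rw [tt_neg h0, div_neg, div_self h0, tt_mul_pow]
  have : q^j ≠ 0 := zpow_ne_zero _ h0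
  field_simp

lemma tt_refl1 {q : ℂ} (h0 : q ≠ 0) (j : ℤ) : tt (-q) q (-1-j) = - tt (-q) q j := by
  rw [show -1-j = -(j+1) by ring, tt_neg h0, div_neg, div_self h0,
    tt_succ (by norm_num) h0, tt_mul_pow]
  ring

lemma slater19_fin {q : ℂ} (h0 : q ≠ 0) (h1 : ‖q‖ < 1) (n : ℕ) :
    ∑' j : ℤ, tt (-q) q j * (rr (q^2) (n-j) * rr (q^2) (n+j))
      = (-1)^n * q^(n^2) * qPoch q (q^2) n / qPoch (q^2) (q^2) (2*n) := by
  have hx := norm_pow_lt h1 two_ne_zero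
  have hx0 : q^2 ≠ 0 := pow_ne_zero 2 h0
  induction n with
  | zero =>
    have := tsum_zero_level (q^2) (tt (-q) q)
    simp only [Nat.cast_zero, this]
    simp [tt, qPoch]
  | succ n ih =>
    have h := bb_step hx0 hx (tt (-q) q) n
    set b : ℤ → ℂ := fun j => rr (q^2) (n-j) * rr (q^2) (n+j) with hb
    have hsum : ∀ f : ℤ → ℂ, Summable (fun j => f j * b j) := fun f => summable_rr (q^2) f n n
    have bsymm : ∀ j, b (-j) = b j := by
      intro j; simp only [hb]; rw [sub_neg_eq_add, ← sub_eq_add_neg, mul_comm]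
    have y0 : ∀ j : ℤ, q^j ≠ 0 := fun j => zpow_ne_zero _ h0
    have Z1 : ∑' j, (tt (-q) q j * q^j) * b j = ∑' j, (tt (-q) q j * ((q^j)⁻¹)^2) * b j := by
      rw [← tsum_refl _ 0]
      refine tsum_congr fun j => ?_
      rw [zero_sub, bsymm, tt_refl0 h0, zpow_neg]; ring
    have Z2 : ∑' j, (tt (-q) q j * (q^j)⁻¹) * b j = ∑' j, tt (-q) q j * b j := by
      rw [← tsum_refl _ 0]
      refine tsum_congr fun j => ?_
      rw [zero_sub, bsymm, tt_refl0 h0, zpow_neg]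
      have := y0 j
      field_simp
    have Z3 : ∑' j, (tt (-q) q j * (1 - (q^n)^2 * ((q^j)⁻¹)^2)) * b j = 0 := by
      have e := tsum_refl (fun j => (tt (-q) q j * (1 - (q^n)^2 * ((q^j)⁻¹)^2)) * b j) (-1)
      have e2 : ∀ j : ℤ, (tt (-q) q (-1-j) * (1 - (q^n)^2 * ((q^(-1-j))⁻¹)^2)) * b (-1-j)
          = - ((tt (-q) q j * (1 - (q^n)^2 * ((q^j)⁻¹)^2)) * b j) := by
        intro j
        rw [tt_refl1 h0]
        simp only [hb]
        have r1 : rr (q^2) ((n:ℤ)-j-1) = (1 - (q^n)^2 * ((q^j)⁻¹)^2) * rr (q^2) (n-j) := by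
          rw [rr_rec hx, zpow_sub₀ hx0, zpow_natCast]
          rw [sq_zpow, inv_pow, div_eq_mul_inv]
          ring
        have r2 : rr (q^2) ((n:ℤ)+j) = (1 - (q^n)^2 * ((q^(-1-j))⁻¹)^2) * rr (q^2) (n+j+1) := by
          rw [show (n:ℤ)+j = n+j+1-1 by ring, rr_rec hx]
          rw [show (n:ℤ)+j+1-1+1 = n+j+1 by ring]
          congr 2
          rw [show (-1-j:ℤ) = -(j+1) by ring, zpow_neg, inv_inv, ← mul_pow, ← zpow_natCast q n,
            ← zpow_add₀ h0, ← zpow_natCast, ← zpow_natCast, ← zpow_mul, ← zpow_mul]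
          congr 1; ring
        rw [show (n:ℤ)-(-1-j) = n+j+1 by ring, show (n:ℤ)+(-1-j) = n-j-1 by ring, r1, r2]
        ring
      simp only [e2, tsum_neg] at e
      have := neg_eq_self.1 e
      exact this
    have e : ∀ j : ℤ, (tt (-q) q j * (1 + (q^2)^(2*(n:ℤ)+1)) + tt (-q) q (j-1) * (q^2)^((n:ℤ)+j)
        + tt (-q) q (j+1) * (q^2)^((n:ℤ)-j)) * b j
        = (-(q * (q^n)^2) * (1 - q * (q^n)^2)) * (tt (-q) q j * b j)
        + q*(q^n)^2 * (tt (-q) q j * b j)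
        - (q^n)^2 * ((tt (-q) q j * q^j) * b j)
        - q * (q^n)^2 * ((tt (-q) q j * (q^j)⁻¹) * b j)
        + (q^n)^2 * ((tt (-q) q j * ((q^j)⁻¹)^2) * b j)
        + (tt (-q) q j * (1 - (q^n)^2 * ((q^j)⁻¹)^2)) * b j := by
      intro j
      rw [tt_succ (neg_ne_zero.2 h0) h0, tt_pred (neg_ne_zero.2 h0) h0]
      have p : (q^2)^j = (q^j)^2 := sq_zpow q j
      rw [zpow_add_one₀ hx0, two_mul, zpow_add₀ hx0, zpow_sub₀ hx0, zpow_add₀ hx0, zpow_natCast, p]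
      have := y0 j
      field_simp
      ring
    have HS := ((((((hsum (tt (-q) q)).hasSum.mul_left (-(q * (q^n)^2) * (1 - q * (q^n)^2))).add
      ((hsum (tt (-q) q)).hasSum.mul_left (q*(q^n)^2))).sub
      ((hsum (fun j => tt (-q) q j * q^j)).hasSum.mul_left ((q^n)^2))).sub
      ((hsum (fun j => tt (-q) q j * (q^j)⁻¹)).hasSum.mul_left (q*(q^n)^2))).add
      ((hsum (fun j => tt (-q) q j * ((q^j)⁻¹)^2)).hasSum.mul_left ((q^n)^2))).add
      (hsum (fun j => tt (-q) q j * (1 - (q^n)^2 * ((q^j)⁻¹)^2))).hasSum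
    rw [tsum_congr e, HS.tsum_eq, Z1, Z2, Z3] at h
    have h1' := sub_ne_zero.2 (ne_one_aux hx hx (2*n)).symm
    have h2' := sub_ne_zero.2 (ne_one_aux hx hx (2*n+1)).symm
    have e1 : (q^2) ^ (2*(n:ℤ)+1) = q^2 * (q^2)^(2*n) := by
      rw [zpow_add_one₀ hx0]; norm_cast; ring
    have e2 : (q^2) ^ (2*(n:ℤ)+2) = q^2 * (q^2)^(2*n+1) := by
      norm_cast; ring
    rw [e1, e2, ih] at h
    rw [show 2*(n+1) = 2*n+1+1 by ring, qPoch_succ, qPoch_succ, qPoch_succ]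
    have h3 := qPoch_ne hx hx (2*n)
    rw [eq_div_iff (mul_ne_zero (mul_ne_zero h3 h1') h2')]
    push_cast
    rw [show ∀ S : ℂ, S * (qPoch (q^2) (q^2) (2*n) * (1 - q^2 * (q^2)^(2*n)) *
      (1 - q^2*(q^2)^(2*n+1)))
      = (1 - q^2 * (q^2)^(2*n)) * (1 - q^2*(q^2)^(2*n+1)) * S * qPoch (q^2) (q^2) (2*n) by
        intro S; ring, h]
    field_simp
    ring

lemma slater19 {q : ℂ} (h0 : q ≠ 0) (h1 : ‖q‖ < 1) :
    HasSum (fun n : ℕ => (q^2)^(n^2) *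
        ((-1)^n * q^(n^2) * qPoch q (q^2) n / qPoch (q^2) (q^2) (2*n)))
      (qPochInf (q^3) (q^5) * qPochInf (q^2) (q^5) * qPochInf (q^5) (q^5)
        / qPochInf (q^2) (q^2)) := by
  have hx := norm_pow_lt h1 two_ne_zero
  have hx0 : q^2 ≠ 0 := pow_ne_zero 2 h0
  have h := bailey hx0 hx (s := 0) (by omega) (fun j => tt_norm_le h1 j h0) Function.injective_id
  have j := jtp (z := q^3) (x := q^5) (pow_ne_zero _ h0) (pow_ne_zero _ h0) (norm_pow_lt h1 (by omega))
  rw [show q^5/q^3 = q^2 by field_simp] at j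
  rw [← j]
  convert h using 4 with n j
  · ring
  · rw [← slater19_fin h0 h1]
    simp
  · obtain ⟨d, hd⟩ : ∃ d, j*(j-1) = 2 * d := (Int.even_mul_pred_self j).two_dvd
    rw [tt, tt, hd, Int.mul_ediv_cancel_left _ two_ne_zero, neg_eq_neg_one_mul, mul_zpow,
      neg_eq_neg_one_mul q, mul_zpow]
    simp only [← zpow_natCast q, ← zpow_mul]
    rw [mul_assoc, mul_assoc, mul_assoc, ← zpow_add₀ h0, ← zpow_add₀ h0, ← zpow_add₀ h0]
    congr 2
    simp only [id]
    push_cast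
    linear_combination (-2) * hd

lemma summable_rr' (x : ℂ) (f : ℤ → ℂ) (a b : ℤ) {φ : ℤ → ℤ} (hφ : Function.Injective φ) :
    Summable (fun j : ℤ => f j * (rr x (a - φ j) * rr x (b + φ j))) := by
  refine summable_of_hasFiniteSupport (((Set.finite_Icc (-b) a).preimage hφ.injOn).subset ?_)
  intro j hj
  by_contra h
  apply hj
  rw [Set.mem_preimage, Set.mem_Icc, not_and_or] at h
  simp only []
  rcases h with h | h
  · rw [rr_neg x (show b + φ j < 0 by omega)]; simp
  · rw [rr_neg x (show a - φ j < 0 by omega)]; simp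

lemma inj_two (e : ℤ) : Function.Injective (fun m : ℤ => 2*m+e) := fun a b h => by
  simp only [] at h; omega

lemma slater44_fin {q : ℂ} (h0 : q ≠ 0) (h1 : ‖q‖ < 1) (n : ℕ) :
    ∑' m : ℤ, tt (-q^2) (q^2) m * (rr q (n-(2*m+0)) * rr q (n+1+(2*m+0))
        - rr q (n-(2*m+1)) * rr q (n+1+(2*m+1)))
      = 2 * q^(n*(n+1)/2) * qPoch (-q) q n / qPoch q q (2*n+1) := by
  have hx0 : q^2 ≠ 0 := pow_ne_zero 2 h0
  have hz0 : -q^2 ≠ 0 := neg_ne_zero.2 hx0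
  induction n with
  | zero =>
    rw [tsum_eq_sum (s := {0, -1})]
    · rw [Finset.sum_pair (by norm_num)]
      have r1 : rr q 1 = 1 / (1-q) := by
        have := rr_nat q 1
        simp only [Nat.cast_one] at this
        rw [this]; simp [qPoch]
      have hq : 1 - q ≠ 0 := by
        have := sub_ne_zero.2 (ne_one_aux h1 h1 0).symm
        simpa using this
      simp only [tt, Nat.cast_zero]
      norm_num [rr_zero, r1, rr_neg, qPoch]
      field_simp
      ring
    · intro m hm
      simp only [Finset.mem_insert, Finset.mem_singleton, not_or] at hm
      rcases lt_or_gt_of_ne hm.1 with h | h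
      · rw [rr_neg q (show ((0:ℕ):ℤ)+1+(2*m+0) < 0 by push_cast; omega),
          rr_neg q (show ((0:ℕ):ℤ)+1+(2*m+1) < 0 by push_cast; omega)]; simp
      · rw [rr_neg q (show ((0:ℕ):ℤ)-(2*m+0) < 0 by push_cast; omega),
          rr_neg q (show ((0:ℕ):ℤ)-(2*m+1) < 0 by push_cast; omega)]; simp
  | succ n ih =>
    set c : ℤ → ℂ := fun r => rr q (n-r) * rr q (n+1+r) with hc
    set u : ℤ → ℂ := tt (-q^2) (q^2) with hu
    have hs : ∀ (f : ℤ → ℂ) (e : ℤ), Summable (fun m => f m * c (2*m+e)) := fun f e =>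
      summable_rr' q f n (n+1) (inj_two e)
    have y0 : ∀ j : ℤ, q^j ≠ 0 := fun j => zpow_ne_zero _ h0
    have hA : Summable (fun m => (u m * (1 + q^(2*n+2)) - u m * q^((n:ℤ)-2*m)) * c (2*m+0)
        + (u m * q^((n:ℤ)+2+2*m) - u m * (1 + q^(2*n+2))) * c (2*m+1)) :=
      (hs _ 0).add (hs _ 1)
    have hB : Summable (fun m => u m * q^(n+1) * c (2*m+0)) := hs _ 0
    have hC : Summable (fun m => -u m * q^(n+1) * c (2*m+1)) := hs _ 1
    have key : (1 - q * q^(2*n+1)) * (1 - q * q^(2*n+1+1)) *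
        ∑' m : ℤ, u m * (rr q ((n+1:ℕ)-(2*m+0)) * rr q ((n+1:ℕ)+1+(2*m+0))
        - rr q ((n+1:ℕ)-(2*m+1)) * rr q ((n+1:ℕ)+1+(2*m+1)))
        = q^(n+1) * (1 + q^(n+1)) * ∑' m : ℤ, u m * (c (2*m+0) - c (2*m+1)) := by
      rw [← tsum_mul_left, ← tsum_mul_left]
      refine (tsum_three hA hB hC fun m => ?_).trans (tsum_congr fun m => ?_)
      · have E1 := bb_rec h0 h1 n 1 (2*m)
        have E2 := bb_rec h0 h1 n 1 (2*m+1)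
        have z1 : q ^ (2*(n:ℤ)+1+1) = q * q^(2*n+1) := by
          rw [← pow_succ', ← zpow_natCast]; congr 1
        have z2 : q ^ (2*(n:ℤ)+1+2) = q * q^(2*n+1+1) := by
          rw [← pow_succ', ← zpow_natCast]; congr 1
        have u1 : u (m+1) = -q^2 * (q^(2*m)) * u m := by
          rw [hu, tt_succ hz0 hx0, mul_comm 2 m, zpow_mul, sq_zpow]; norm_cast
        have u2 : u (m-1) = - (q^(2*m))⁻¹ * u m := by
          rw [hu, tt_pred hz0 hx0, mul_comm 2 m, zpow_mul, sq_zpow]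
          field_simp
        rw [z1, z2] at E1 E2
        have c1 : c (2*(m+1)+0) = rr q (n-(2*m+1+1)) * rr q (n+1+(2*m+1+1)) := by
          simp only [hc]; ring_nf
        have c2 : c (2*(m-1)+1) = rr q (n-(2*m-1)) * rr q (n+1+(2*m-1)) := by
          simp only [hc]; ring_nf
        have g1 : ((n+1:ℕ):ℤ) - (2*m+0) = n+1-2*m := by push_cast; ring
        have g2 : ((n+1:ℕ):ℤ) + 1 + (2*m+0) = n+1+1+2*m := by push_cast; ring
        have g3 : ((n+1:ℕ):ℤ) - (2*m+1) = n+1-(2*m+1) := by push_cast; ring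
        have g4 : ((n+1:ℕ):ℤ) + 1 + (2*m+1) = n+1+1+(2*m+1) := by push_cast; ring
        rw [g1, g2, g3, g4, u1, u2, c1, c2]
        rw [show ∀ K A B : ℂ, K * (u m * (A - B)) = u m * (K * A - K * B) by intros; ring, E1, E2]
        simp only [hc, add_zero]
        rw [show 2*m+1-1 = 2*m by ring]
        have w1 : q^((n:ℤ)+1+1+2*m) = q^n * q * q * q^(2*m) := by
          rw [zpow_add₀ h0, zpow_add_one₀ h0, zpow_add_one₀ h0, zpow_natCast]
        have w2 : q^((n:ℤ)+1-2*m) = q^n * q * (q^(2*m))⁻¹ := by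
          rw [zpow_sub₀ h0, zpow_add_one₀ h0, zpow_natCast, div_eq_mul_inv]
        have w3 : q^((n:ℤ)+1+1+(2*m+1)) = q^n * q * q * q^(2*m) * q := by
          rw [zpow_add₀ h0, zpow_add_one₀ h0, zpow_add_one₀ h0, zpow_add_one₀ h0, zpow_natCast]
          ring
        have w4 : q^((n:ℤ)+1-(2*m+1)) = q^n * (q^(2*m))⁻¹ := by
          rw [show (n:ℤ)+1-(2*m+1) = n-2*m by ring, zpow_sub₀ h0, zpow_natCast, div_eq_mul_inv]
        have w5 : q^((n:ℤ)-2*m) = q^n * (q^(2*m))⁻¹ := by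
          rw [zpow_sub₀ h0, zpow_natCast, div_eq_mul_inv]
        have w6 : q^((n:ℤ)+2+2*m) = q^n * q * q * q^(2*m) := by
          rw [← w1]; congr 1
        rw [w1, w2, w3, w4, w5, w6]
        have := y0 (2*m)
        generalize q^(2*m) = y at *
        field_simp
        ring
      · have a1 : rr q ((n:ℤ)-(2*m+1)) = (1 - q^((n:ℤ)-2*m)) * rr q (n-2*m) := by
          rw [← rr_rec h1]; congr 1; ring
        have a2 : rr q ((n:ℤ)+1+2*m) = (1 - q^((n:ℤ)+2+2*m)) * rr q (n+2+2*m) := by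
          rw [← rr_rec h1]; congr 1; ring
        have a3 : rr q ((n:ℤ)+1+(2*m+1)) = rr q (n+2+2*m) := by congr 1; ring
        simp only [hc, add_zero]
        rw [a1, a2, a3]
        ring
    rw [ih] at key
    have h1' := sub_ne_zero.2 (ne_one_aux h1 h1 (2*n+1)).symm
    have h2' := sub_ne_zero.2 (ne_one_aux h1 h1 (2*n+1+1)).symm
    have h3 := qPoch_ne h1 h1 (2*n+1)
    rw [show 2*(n+1)+1 = 2*n+1+1+1 by ring, qPoch_succ, qPoch_succ, qPoch_succ,
      eq_div_iff (mul_ne_zero (mul_ne_zero h3 h1') h2')]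
    rw [show ∀ S : ℂ, S * (qPoch q q (2*n+1) * (1 - q * q^(2*n+1)) * (1 - q*q^(2*n+1+1)))
      = (1 - q * q^(2*n+1)) * (1 - q*q^(2*n+1+1)) * S * qPoch q q (2*n+1) by intro S; ring, key]
    have tri : (n+1)*(n+1+1)/2 = n*(n+1)/2 + (n+1) := by
      rw [show (n+1)*(n+1+1) = n*(n+1) + (n+1)*2 by ring, Nat.add_mul_div_right _ _ two_pos]
    rw [tri]
    field_simp
    ring

lemma slater44 {q : ℂ} (h0 : q ≠ 0) (h1 : ‖q‖ < 1) :
    HasSum (fun n : ℕ => q^(n^2+n) * (q^(n*(n+1)/2) * qPoch (-q) q n / qPoch q q (2*n+1)))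
      (qPochInf (q^2) (q^10) * qPochInf (q^8) (q^10) * qPochInf (q^10) (q^10)
        / qPochInf q q) := by
  have hx := norm_pow_lt h1 two_ne_zero
  have hx0 : q^2 ≠ 0 := pow_ne_zero 2 h0
  have hA := bailey h0 h1 (s := 1) le_rfl (fun j => tt_norm_le hx j hx0) (inj_two 0)
  have hB := bailey h0 h1 (s := 1) le_rfl (fun j => tt_norm_le hx j hx0) (inj_two 1)
  have j := jtp (z := q^8) (x := q^10) (pow_ne_zero _ h0) (pow_ne_zero _ h0)
    (norm_pow_lt h1 (by omega))
  rw [show q^10/q^8 = q^2 by field_simp] at j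
  have sA : ∑' m : ℤ, tt (-q^2) (q^2) m * q^((2*m+0)^2 + ((1:ℕ):ℤ) * (2*m+0))
      = ∑' m : ℤ, tt (-q^8) (q^10) m := by
    refine tsum_congr fun j => ?_
    obtain ⟨d, hd⟩ : ∃ d, j*(j-1) = 2 * d := (Int.even_mul_pred_self j).two_dvd
    rw [tt, tt, hd, Int.mul_ediv_cancel_left _ two_ne_zero, neg_eq_neg_one_mul, mul_zpow,
      neg_eq_neg_one_mul (q^8), mul_zpow]
    simp only [← zpow_natCast q, ← zpow_mul]
    rw [mul_assoc, mul_assoc, mul_assoc, ← zpow_add₀ h0, ← zpow_add₀ h0, ← zpow_add₀ h0]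
    congr 2
    push_cast
    linear_combination 4 * hd
  have sB : ∑' m : ℤ, tt (-q^2) (q^2) m * q^((2*m+1)^2 + ((1:ℕ):ℤ) * (2*m+1))
      = - ∑' m : ℤ, tt (-q^2) (q^2) m * q^((2*m+0)^2 + ((1:ℕ):ℤ) * (2*m+0)) := by
    rw [← tsum_refl _ (-1), ← tsum_neg]
    refine tsum_congr fun j => ?_
    rw [tt_refl1 hx0, neg_mul]
    congr 3
    push_cast
    ring
  rw [sB, sA, j] at hB
  rw [sA, j] at hA
  have h := (hA.sub hB).mul_left (1/2)
  have hv : ∀ A B : ℂ, A / B = 1/2 * (A / B - -A / B) := fun A B => by ring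
  rw [mul_comm (qPochInf (q^2) (q^10)), hv]
  refine Eq.mp (congrArg (fun f => HasSum f _) (funext fun n => ?_)) h
  rw [← mul_sub, ← (summable_rr' q (tt (-q^2) (q^2)) n (n+(1:ℕ)) (inj_two 0)).tsum_sub
    (summable_rr' q (tt (-q^2) (q^2)) n (n+(1:ℕ)) (inj_two 1))]
  have := slater44_fin h0 h1 n
  simp only [← mul_sub]
  simp only [Nat.cast_one]
  rw [this]
  ring

lemma refl_even {p : ℂ} (h0 : p ≠ 0) (h1 : ‖p‖ < 1) (m : ℕ) :
    qPochInf (-(p^(1-2*(m:ℤ)))) (p^2) * p^(m^2)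
      = qPoch (-p) (p^2) m * qPochInf (-p) (p^2) := by
  have hx := norm_pow_lt h1 two_ne_zero
  induction m with
  | zero => simp [qPoch_zero]
  | succ m ih =>
    rw [qPochInf_split _ hx 1, qPoch_succ, qPoch_succ, qPoch_zero]
    have e1 : -(p^(1-2*((m+1:ℕ):ℤ))) * (p^2)^1 = -(p^(1-2*(m:ℤ))) := by
      rw [pow_one, neg_mul, ← zpow_natCast p 2, ← zpow_add₀ h0]
      congr 2; push_cast; ring
    have e2 : p^(1-2*((m+1:ℕ):ℤ)) = (p^(2*m+1))⁻¹ := by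
      rw [← zpow_natCast, ← zpow_neg]; congr 1
    rw [e1, e2]
    have hp : p^(2*m+1) ≠ 0 := pow_ne_zero _ h0
    have e3 : p^((m+1)^2) = p^(m^2) * p^(2*m+1) := by rw [← pow_add]; congr 1; ring
    have e4 : p * (p^2)^m = p^(2*m+1) := by rw [← pow_mul, ← pow_succ']
    rw [e3, neg_mul p, e4]
    calc _ = (p^(2*m+1) + 1) * (qPochInf (-(p^(1-2*(m:ℤ)))) (p^2) * p^(m^2)) := by
            field_simp; ring
      _ = _ := by rw [ih]; ring

lemma refl_odd {p : ℂ} (h0 : p ≠ 0) (h1 : ‖p‖ < 1) (m : ℕ) :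
    qPochInf (-(p^(-2*(m:ℤ)))) (p^2) * p^(m^2+m)
      = 2 * qPoch (-(p^2)) (p^2) m * qPochInf (-(p^2)) (p^2) := by
  have hx := norm_pow_lt h1 two_ne_zero
  induction m with
  | zero =>
    rw [qPochInf_split _ hx 1, qPoch_succ, qPoch_zero]
    norm_num [qPoch_zero]
  | succ m ih =>
    rw [qPochInf_split _ hx 1, qPoch_succ, qPoch_succ, qPoch_zero]
    have e1 : -(p^(-2*((m+1:ℕ):ℤ))) * (p^2)^1 = -(p^(-2*(m:ℤ))) := by
      rw [pow_one, neg_mul, ← zpow_natCast p 2, ← zpow_add₀ h0]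
      congr 2; push_cast; ring
    have e2 : p^(-2*((m+1:ℕ):ℤ)) = (p^(2*m+2))⁻¹ := by
      rw [← zpow_natCast, ← zpow_neg]; congr 1
    rw [e1, e2]
    have hp : p^(2*m+2) ≠ 0 := pow_ne_zero _ h0
    have e3 : p^((m+1)^2+(m+1)) = p^(m^2+m) * p^(2*m+2) := by rw [← pow_add]; congr 1; ring
    have e4 : p^2 * (p^2)^m = p^(2*m+2) := by rw [← pow_mul, ← pow_add]; congr 1; ring
    rw [e3, neg_mul (p^2), e4]
    calc _ = (p^(2*m+2) + 1) * (qPochInf (-(p^(-2*(m:ℤ)))) (p^2) * p^(m^2+m)) := by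
            field_simp; ring
      _ = _ := by rw [ih]; ring

lemma even_id {p : ℂ} (h1 : ‖p‖ < 1) :
    qPochInf (-p) (p^2) ^ 3 * (qPochInf ((-p)^3) ((-p)^5) * qPochInf ((-p)^2) ((-p)^5)
      * qPochInf ((-p)^5) ((-p)^5) / qPochInf ((-p)^2) ((-p)^2))
    = qPochInf (p^2) (p^2) ^ 7
      * (qPochInf p (p^10) * qPochInf (p^9) (p^10) * qPochInf (p^10) (p^10))
      * (qPochInf (p^8) (p^20) * qPochInf (p^12) (p^20) * qPochInf (p^20) (p^20))
      / (qPochInf p p ^ 4 * qPochInf (p^4) (p^4) ^ 4 * qPochInf (p^20) (p^20)) := by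
  have n1 := h1
  have n2 := norm_pow_lt h1 two_ne_zero
  have n4 := norm_pow_lt h1 four_ne_zero
  have n10 := norm_pow_lt (n := 10) h1 (by norm_num)
  have n20 := norm_pow_lt (n := 20) h1 (by norm_num)
  have n5 : ‖(-p)^5‖ < 1 := norm_pow_lt (by rwa [norm_neg]) (by norm_num)
  have d1 := qPochInf_dissect p n1 two_ne_zero
  have d2 := qPochInf_dissect (p^2) n2 two_ne_zero
  have dA := qPochInf_mul_neg p n2
  have d3 := qPochInf_dissect ((-p)^3) n5 two_ne_zero
  have d4 := qPochInf_dissect ((-p)^2) n5 two_ne_zero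
  have d5 := qPochInf_dissect ((-p)^5) n5 two_ne_zero
  have d6 := qPochInf_dissect (-p) n2 (k := 5) (by norm_num)
  have m1 := qPochInf_mul_neg p n10
  have m9 := qPochInf_mul_neg (p^9) n10
  have d7 := qPochInf_dissect (p^2) n10 two_ne_zero
  have d8 := qPochInf_dissect (p^8) n10 two_ne_zero
  simp only [Finset.prod_range_succ, Finset.prod_range_zero, one_mul, pow_zero, mul_one, pow_one]
    at d1 d2 d3 d4 d5 d6 d7 d8
  have x5 : (-p)^5 = -p^5 := by ring
  have x3 : (-p)^3 = -p^3 := by ring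
  have x2 : (-p)^2 = p^2 := by ring
  rw [x3, x5] at d3
  rw [x2, x5] at d4
  rw [x5] at d5
  rw [x2, x3, x5]
  ring_nf at d1 d2 dA d3 d4 d5 d6 m1 m9 d7 d8
  have c1 : qPochInf p p ≠ 0 := qPochInf_ne n1 n1
  have c2 : qPochInf (p^2) (p^2) ≠ 0 := qPochInf_ne n2 n2
  have c4 : qPochInf (p^4) (p^4) ≠ 0 := qPochInf_ne n4 n4
  have c20 : qPochInf (p^20) (p^20) ≠ 0 := qPochInf_ne n20 n20
  have hA : qPochInf (-p) (p^2) * qPochInf p p * qPochInf (p^4) (p^4)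
      = qPochInf (p^2) (p^2) ^ 2 := by
    calc _ = (qPochInf p (p^2) * qPochInf (-p) (p^2)) * qPochInf (p^4) (p^4)
          * qPochInf (p^2) (p^2) := by rw [d1]; ring
      _ = _ := by rw [dA, ← d2]; ring
  have hN : qPochInf (-p^3) (-p^5) * qPochInf (p^2) (-p^5) * qPochInf (-p^5) (-p^5)
      = qPochInf (-p) (p^2) * (qPochInf p (p^10) * qPochInf (p^9) (p^10) * qPochInf (p^10) (p^10))
        * (qPochInf (p^8) (p^20) * qPochInf (p^12) (p^20)) := by
    rw [d3, d4, d5, d6, d7, d8, ← m1, ← m9]; ring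
  rw [hN, div_eq_mul_inv, ← mul_assoc, ← div_eq_mul_inv, div_eq_div_iff c2 (by positivity)]
  generalize qPochInf p (p^10) * qPochInf (p^9) (p^10) * qPochInf (p^10) (p^10) = X
  generalize qPochInf (p^8) (p^20) * qPochInf (p^12) (p^20) = Y
  linear_combination X * Y * qPochInf (p^20) (p^20) *
    ((qPochInf (-p) (p^2) * qPochInf p p * qPochInf (p^4) (p^4))^3
    + (qPochInf (-p) (p^2) * qPochInf p p * qPochInf (p^4) (p^4))^2 * qPochInf (p^2) (p^2) ^ 2
    + (qPochInf (-p) (p^2) * qPochInf p p * qPochInf (p^4) (p^4)) * qPochInf (p^2) (p^2) ^ 4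
    + qPochInf (p^2) (p^2) ^ 6) * hA

lemma odd_id {x : ℂ} (h1 : ‖x‖ < 1) (c N : ℂ) :
    c * qPochInf (-x) x ^ 3 * (N / qPochInf x x)
    = c * qPochInf (x^2) (x^2) ^ 3 * N / qPochInf x x ^ 4 := by
  have c1 : qPochInf x x ≠ 0 := qPochInf_ne h1 h1
  rw [← qPochInf_mul_neg x h1]
  field_simp

lemma zq {q : ℂ} (h0 : q ≠ 0) (l : ℤ) (i : ℕ) :
    tt ((q^4)^(1+l)) ((q^4)^2) i = q^(4*(i:ℤ)^2 + 4*i*l) := by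
  obtain ⟨d, hd⟩ : ∃ d, (i:ℤ)*(i-1) = 2 * d := (Int.even_mul_pred_self i).two_dvd
  rw [tt, hd, Int.mul_ediv_cancel_left _ two_ne_zero]
  rw [← pow_mul]
  simp only [← zpow_natCast q, ← zpow_mul]
  rw [← zpow_add₀ h0]
  congr 1
  push_cast
  linear_combination -4 * hd

lemma F_summable {q : ℂ} (h0 : q ≠ 0) (h1 : ‖q‖ < 1) :
    Summable (fun p : ℕ × ℕ × ℕ × ℕ =>
      (fun (i j k l : ℕ) =>
        q ^ ((4*(i:ℤ)^2 + 4*(j:ℤ)^2 + 4*(k:ℤ)^2 + 5*(l:ℤ)^2 - 4*(i:ℤ)*(l:ℤ) - 4*(j:ℤ)*(l:ℤ) + 4*(k:ℤ)*(l:ℤ)) : ℤ) /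
          (qPoch (q ^ 8) (q ^ 8) i * qPoch (q ^ 8) (q ^ 8) j * qPoch (q ^ 8) (q ^ 8) k * qPoch (q ^ 8) (q ^ 8) l))
        p.1 p.2.1 p.2.2.1 p.2.2.2) := by
  have hx : ‖q^8‖ < 1 := norm_pow_lt h1 (by norm_num)
  obtain ⟨C, hC, hb⟩ := rr_bound hx
  have hb' : ∀ n : ℕ, ‖(qPoch (q^8) (q^8) n)⁻¹‖ ≤ C := fun n => by
    have := hb n
    rwa [rr_nat, one_div] at this
  have g : Summable (fun n : ℕ => ‖q‖^n) := summable_geometric_of_lt_one (norm_nonneg _) h1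
  have gn : ∀ n : ℕ, 0 ≤ ‖q‖^n := fun n => by positivity
  have g2 := g.mul_of_nonneg g gn gn
  have g3 := g.mul_of_nonneg g2 gn (fun p => mul_nonneg (gn _) (gn _))
  have g4 := g.mul_of_nonneg g3 gn (fun p => mul_nonneg (gn _) (mul_nonneg (gn _) (gn _)))
  refine Summable.of_norm_bounded (g4.mul_left (C*C*C*C)) ?_
  rintro ⟨i, j, k, l⟩
  simp only
  rw [div_eq_mul_inv, mul_inv, mul_inv, mul_inv, norm_mul, norm_mul, norm_mul, norm_mul, mul_comm]
  refine mul_le_mul ?_ ?_ (norm_nonneg _) (by positivity)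
  · have := hb' i; have := hb' j; have := hb' k; have := hb' l
    gcongr
  · rw [← pow_add, ← pow_add, ← pow_add, norm_zpow, ← zpow_natCast]
    refine zpow_le_zpow_right_of_le_one₀ (norm_pos_iff.2 h0) h1.le ?_
    have sq : ∀ n : ℕ, (n:ℤ) ≤ (n:ℤ)^2 := fun n => by
      exact_mod_cast Nat.le_self_pow two_ne_zero n
    have := sq i; have := sq j; have := sq k; have := sq l
    have : (0:ℤ) ≤ (k:ℤ)*l := by positivity
    push_cast
    nlinarith [sq_nonneg ((i:ℤ)-l), sq_nonneg ((j:ℤ)-l)]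

def rotE : ℕ × (ℕ × ℕ × ℕ) ≃ ℕ × ℕ × ℕ × ℕ where
  toFun p := (p.2.1, p.2.2.1, p.2.2.2, p.1)
  invFun p := (p.2.2.2, p.1, p.2.1, p.2.2.1)
  left_inv _ := rfl
  right_inv _ := rfl

lemma inner_triple {q : ℂ} (h0 : q ≠ 0) (h1 : ‖q‖ < 1) (l : ℕ) :
    ∑' c : ℕ × ℕ × ℕ, (q ^ ((4*(c.1:ℤ)^2 + 4*(c.2.1:ℤ)^2 + 4*(c.2.2:ℤ)^2 + 5*(l:ℤ)^2 - 4*(c.1:ℤ)*(l:ℤ) - 4*(c.2.1:ℤ)*(l:ℤ) + 4*(c.2.2:ℤ)*(l:ℤ)) : ℤ) /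
          (qPoch (q ^ 8) (q ^ 8) c.1 * qPoch (q ^ 8) (q ^ 8) c.2.1 * qPoch (q ^ 8) (q ^ 8) c.2.2 * qPoch (q ^ 8) (q ^ 8) l))
    = q^(5*l^2) / qPoch (q^8) (q^8) l * (qPochInf (-((q^4)^(1-(l:ℤ)))) ((q^4)^2) ^ 2
        * qPochInf (-((q^4)^(1+(l:ℤ)))) ((q^4)^2)) := by
  have hp0 : q^4 ≠ 0 := pow_ne_zero _ h0
  have hx0 : (q^4)^2 ≠ 0 := pow_ne_zero _ hp0
  have hx : ‖(q^4)^2‖ < 1 := norm_pow_lt (norm_pow_lt h1 (by norm_num)) (by norm_num)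
  have za : (q^4)^(1-(l:ℤ)) ≠ 0 := zpow_ne_zero _ hp0
  have zb : (q^4)^(1+(l:ℤ)) ≠ 0 := zpow_ne_zero _ hp0
  have sa := euler_summable za hx0 hx
  have sb := euler_summable zb hx0 hx
  have ea := euler_id za hx0 hx
  have eb := euler_id zb hx0 hx
  rw [sq (qPochInf _ _), mul_assoc (qPochInf _ _), ← ea, ← eb, tsum_mul_tsum_of_summable_norm sa sb,
    tsum_mul_tsum_of_summable_norm sa (sa.mul_norm sb), ← tsum_mul_left]
  refine tsum_congr fun c => ?_
  obtain ⟨i, j, k⟩ := c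
  have e8 : (q^4)^2 = q^8 := by ring
  simp only
  rw [sub_eq_add_neg (1:ℤ) (l:ℤ), zq h0, zq h0, zq h0, e8]
  have : q ^ ((4*(i:ℤ)^2 + 4*(j:ℤ)^2 + 4*(k:ℤ)^2 + 5*(l:ℤ)^2 - 4*(i:ℤ)*(l:ℤ) - 4*(j:ℤ)*(l:ℤ) + 4*(k:ℤ)*(l:ℤ)) : ℤ)
    = q^(5*l^2) * (q^(4*(i:ℤ)^2+4*i*(-(l:ℤ))) * (q^(4*(j:ℤ)^2+4*j*(-(l:ℤ))) * q^(4*(k:ℤ)^2+4*k*(l:ℤ)))) := by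
    rw [← zpow_natCast q, ← zpow_add₀ h0, ← zpow_add₀ h0, ← zpow_add₀ h0]
    congr 1
    push_cast
    ring
  rw [this]
  simp only [div_eq_mul_inv, mul_inv]
  ring

lemma H_even {q : ℂ} (h0 : q ≠ 0) (h1 : ‖q‖ < 1) (m : ℕ) :
    q^(5*(2*m)^2) / qPoch (q^8) (q^8) (2*m) * (qPochInf (-((q^4)^(1-((2*m:ℕ):ℤ)))) ((q^4)^2) ^ 2
        * qPochInf (-((q^4)^(1+((2*m:ℕ):ℤ)))) ((q^4)^2))
    = qPochInf (-(q^4)) ((q^4)^2) ^ 3 * (((-(q^4))^2)^(m^2) * ((-1)^m * (-(q^4))^(m^2)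
      * qPoch (-(q^4)) ((-(q^4))^2) m / qPoch ((-(q^4))^2) ((-(q^4))^2) (2*m))) := by
  have e8 : q^8 = (q^4)^2 := by ring
  have e20 : q^(5*(2*m)^2) = (q^4)^(m^2) * (q^4)^(m^2) * ((q^4)^2)^(m^2) * (q^4)^(m^2) := by
    simp only [← pow_mul, ← pow_add]; congr 1; ring
  rw [e8, e20, neg_sq (q^4)]
  have hp0 : q^4 ≠ 0 := pow_ne_zero _ h0
  have hp1 : ‖q^4‖ < 1 := norm_pow_lt h1 (by norm_num)
  generalize q^4 = p at *
  have hx := norm_pow_lt hp1 two_ne_zero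
  have r := refl_even hp0 hp1 m
  have sp := qPochInf_split (-p) hx m
  have nz : qPoch (-p) (p^2) m ≠ 0 := qPoch_ne (by rwa [norm_neg]) hx m
  have e1 : -p * (p^2)^m = -(p^(1+((2*m:ℕ):ℤ))) := by
    rw [zpow_add₀ hp0, zpow_natCast, zpow_one, pow_mul, neg_mul]
  rw [e1] at sp
  have sgn : (-1:ℂ)^m * (-p)^(m^2) = p^(m^2) := by
    rw [neg_pow p, ← mul_assoc, ← pow_add, Even.neg_one_pow, one_mul]
    have := Nat.even_mul_succ_self m
    rwa [show m + m^2 = m*(m+1) by ring]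
  rw [sgn]
  push_cast at r sp ⊢
  calc _ = (qPochInf (-(p^(1-2*(m:ℤ)))) (p^2) * p^(m^2))^2 * ((p^2)^(m^2) * p^(m^2))
        / qPoch (p^2) (p^2) (2*m) * qPochInf (-(p^(1+2*(m:ℤ)))) (p^2) := by ring
    _ = qPochInf (-p) (p^2)^2 * (qPoch (-p) (p^2) m * qPochInf (-(p^(1+2*(m:ℤ)))) (p^2))
        * ((p^2)^(m^2) * p^(m^2)) * qPoch (-p) (p^2) m / qPoch (p^2) (p^2) (2*m) := by
        rw [r]; ring
    _ = _ := by rw [← sp]; ring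

lemma H_odd {q : ℂ} (h0 : q ≠ 0) (h1 : ‖q‖ < 1) (m : ℕ) :
    q^(5*(2*m+1)^2) / qPoch (q^8) (q^8) (2*m+1)
      * (qPochInf (-((q^4)^(1-((2*m+1:ℕ):ℤ)))) ((q^4)^2) ^ 2
        * qPochInf (-((q^4)^(1+((2*m+1:ℕ):ℤ)))) ((q^4)^2))
    = 4 * q^5 * qPochInf (-(q^8)) (q^8) ^ 3 * ((q^8)^(m^2+m) * ((q^8)^(m*(m+1)/2)
      * qPoch (-(q^8)) (q^8) m / qPoch (q^8) (q^8) (2*m+1))) := by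
  have e8 : q^8 = (q^4)^2 := by ring
  obtain ⟨d, hd⟩ : ∃ d, m*(m+1) = 2 * d := (Nat.even_mul_succ_self m).two_dvd
  have e20 : q^(5*(2*m+1)^2) = q^5 * ((q^4)^(m^2+m) * (q^4)^(m^2+m) * ((q^4)^2)^(m^2+m)
      * ((q^4)^2)^d) := by
    simp only [← pow_mul, ← pow_add]; congr 1; linarith
  rw [e8, e20, hd, Nat.mul_div_cancel_left _ two_pos]
  have hp0 : q^4 ≠ 0 := pow_ne_zero _ h0
  have hp1 : ‖q^4‖ < 1 := norm_pow_lt h1 (by norm_num)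
  generalize q^5 = c
  generalize q^4 = p at *
  have hx := norm_pow_lt hp1 two_ne_zero
  have r := refl_odd hp0 hp1 m
  have sp := qPochInf_split (-(p^2)) hx m
  have e1 : -(p^2) * (p^2)^m = -(p^(1+((2*m+1:ℕ):ℤ))) := by
    rw [show (1:ℤ)+((2*m+1:ℕ):ℤ) = ((2+2*m:ℕ):ℤ) by push_cast; ring, zpow_natCast, pow_add,
      pow_mul, neg_mul]
  have e2 : (1:ℤ)-((2*m+1:ℕ):ℤ) = -2*(m:ℤ) := by push_cast; ring
  rw [e1] at sp
  rw [e2]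
  generalize qPochInf (-(p^(1+((2*m+1:ℕ):ℤ)))) (p^2) = Z at *
  calc _ = (qPochInf (-(p^(-2*(m:ℤ)))) (p^2) * p^(m^2+m))^2 * (c * ((p^2)^(m^2+m) * (p^2)^d))
        / qPoch (p^2) (p^2) (2*m+1) * Z := by ring
    _ = 4 * c * qPochInf (-(p^2)) (p^2)^2 * (qPoch (-(p^2)) (p^2) m * Z)
        * ((p^2)^(m^2+m) * (p^2)^d) * qPoch (-(p^2)) (p^2) m / qPoch (p^2) (p^2) (2*m+1) := by
        rw [r]; ring
    _ = _ := by rw [← sp]; ring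

theorem stmt_19 (q : ℂ) (h0 : 0 < ‖q‖) (h1 : ‖q‖ < 1) :
    (∑' p : ℕ × ℕ × ℕ × ℕ,
      (fun (i j k l : ℕ) =>
        q ^ ((4*(i:ℤ)^2 + 4*(j:ℤ)^2 + 4*(k:ℤ)^2 + 5*(l:ℤ)^2 - 4*(i:ℤ)*(l:ℤ) - 4*(j:ℤ)*(l:ℤ) + 4*(k:ℤ)*(l:ℤ)) : ℤ) /
          (qPoch (q ^ 8) (q ^ 8) i * qPoch (q ^ 8) (q ^ 8) j * qPoch (q ^ 8) (q ^ 8) k * qPoch (q ^ 8) (q ^ 8) l))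
        p.1 p.2.1 p.2.2.1 p.2.2.2)
    = (J q 8)^7 * Jam q 4 40 * Jam q 32 80 / ((J q 4)^4 * (J q 16)^4 * J q 80)
      + 4 * q^5 * (J q 16)^3 * Jam q 16 80 / (J q 8)^4 := by
  have hq : q ≠ 0 := norm_pos_iff.1 h0
  have hF := F_summable hq h1
  have hF' := rotE.summable_iff.2 hF
  refine (rotE.tsum_eq _).symm.trans (hF'.tsum_prod.trans ?_)
  have hin := inner_triple hq h1
  have hp : ‖-(q^4)‖ < 1 := by rw [norm_neg]; exact norm_pow_lt h1 (by norm_num)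
  have hp0 : -(q^4) ≠ 0 := neg_ne_zero.2 (pow_ne_zero _ hq)
  have hx : ‖q^8‖ < 1 := norm_pow_lt h1 (by norm_num)
  have s1 := (slater19 hp0 hp).mul_left (qPochInf (-(q^4)) ((q^4)^2) ^ 3)
  have s2 := (slater44 (pow_ne_zero 8 hq) hx).mul_left (4 * q^5 * qPochInf (-(q^8)) (q^8) ^ 3)
  simp only [← H_even hq h1] at s1
  simp only [← H_odd hq h1] at s2
  rw [even_id (norm_pow_lt h1 (by norm_num))] at s1
  rw [odd_id hx] at s2
  have key := HasSum.even_add_odd (f := fun l : ℕ => q^(5*l^2) / qPoch (q^8) (q^8) l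
    * (qPochInf (-((q^4)^(1-(l:ℤ)))) ((q^4)^2) ^ 2
        * qPochInf (-((q^4)^(1+(l:ℤ)))) ((q^4)^2))) s1 s2
  refine (tsum_congr fun l => hin l).trans (key.tsum_eq.trans ?_)
  simp only [J, Jam, ← pow_mul, Nat.reduceMul, Nat.reduceSub]
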